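/- Let z̃ be the adaptive spectral clustering with threshold T. Assume βn/k⁴ ≥ 400, let ψ̃₀ := Δ/(β^{−1/2} k² n^{−1/2} ‖E‖) and ρ̃ := T/‖E‖, and assume 256 < ρ̃ < ψ̃₀/64 (which ensures r̂ is well defined). Let φ be the bijection of [k] with ℓ(z̃,z*) = (1/n)|{i : z̃_i ≠ φ(z*_i)}|. There exist universal constants C, C' > 0 such that if ψ̃₀ > C, then for every i ∈ [n]: 𝟙{z̃_i ≠ φ(z*_i)} ≤ 𝟙{ (1 − C'(ρ̃ ψ̃₀^{−1} + ρ̃^{−1})) Δ ≤ 2‖Û_{−i,1:r̂} Û_{−i,1:r̂}ᵀ ε_i‖ }. Consequently E ℓ(z̃,z*) ≤ n^{−1} Σ_{i∈[n]} E 𝟙{ (1 − C'(ρ̃ ψ̃₀^{−1} + ρ̃^{−1})) Δ ≤ 2‖Û_{−i,1:r̂} Û_{−i,1:r̂}ᵀ ε_i‖ }. -/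

import Mathlib

open Matrix MeasureTheory ProbabilityTheory
open scoped BigOperators ENNReal NNReal

noncomputable section

/-- Euclidean norm of a vector in `Fin p → ℝ`. -/
def vnorm {p : ℕ} (x : Fin p → ℝ) : ℝ := Real.sqrt (∑ i, (x i) ^ 2)

/-- Frobenius norm of a real matrix. -/
def fnorm {m n : ℕ} (A : Matrix (Fin m) (Fin n) ℝ) : ℝ :=
  Real.sqrt (∑ i, ∑ j, (A i j) ^ 2)

/-- Operator (spectral) norm of a real matrix. -/
def opnorm {m n : ℕ} (A : Matrix (Fin m) (Fin n) ℝ) : ℝ :=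
  ‖LinearMap.toContinuousLinearMap (Matrix.toEuclideanLin A)‖

/-- A (full) singular value decomposition of a real `p × n` matrix `A`:
`A = U D Vᵀ` with `U, V` orthogonal and `D` the rectangular diagonal matrix with the
nonincreasing nonnegative singular values `sv 0 ≥ sv 1 ≥ ⋯` on the diagonal
(0-indexed, so the math `σ_i` is `sv (i-1)`), extended by zero beyond `min p n`. -/
structure SVDData (p n : ℕ) (A : Matrix (Fin p) (Fin n) ℝ) where
  U : Matrix (Fin p) (Fin p) ℝ
  V : Matrix (Fin n) (Fin n) ℝ
  sv : ℕ → ℝ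
  hU : Uᵀ * U = 1
  hV : Vᵀ * V = 1
  sv_anti : ∀ i j : ℕ, i ≤ j → sv j ≤ sv i
  sv_nonneg : ∀ i, 0 ≤ sv i
  sv_zero : ∀ j, min p n ≤ j → sv j = 0
  decomp : A = U * (Matrix.of fun (i : Fin p) (j : Fin n) => if (i : ℕ) = (j : ℕ) then sv (i : ℕ) else 0) * Vᵀ

/-- Projection matrix `U_{1:r} U_{1:r}ᵀ` onto the span of the first `r` columns of `U`. -/
def projr {p : ℕ} (U : Matrix (Fin p) (Fin p) ℝ) (r : ℕ) : Matrix (Fin p) (Fin p) ℝ :=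
  Matrix.of fun i j => ∑ l : Fin p, if (l : ℕ) < r then U i l * U j l else 0

/-- The `l`-th (0-indexed) column of a matrix, as a vector. -/
def matCol {p q : ℕ} (U : Matrix (Fin p) (Fin q) ℝ) (l : ℕ) : Fin p → ℝ :=
  fun i => if h : l < q then U i ⟨l, h⟩ else 0

/-- `β` for a cluster assignment: `(k/n) ·` (size of the smallest cluster),
so that `β·n/k` is the size of the smallest cluster. -/
def betaMin (n k : ℕ) (z : Fin n → Fin k) : ℝ :=
  ((k : ℝ) / n) * ⨅ a : Fin k, ((Finset.univ.filter fun i => z i = a).card : ℝ)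

/-- Minimum pairwise distance between the centers. -/
def Delta {p k : ℕ} (θ : Fin k → Fin p → ℝ) : ℝ :=
  ⨅ q : {q : Fin k × Fin k // q.1 ≠ q.2}, vnorm (fun i => θ q.1.1 i - θ q.1.2 i)

/-- Misclustering error `ℓ(z, z*)`. -/
def miscl {n k : ℕ} (z zs : Fin n → Fin k) : ℝ :=
  (⨅ φ : Equiv.Perm (Fin k), ((Finset.univ.filter fun i => z i ≠ φ (zs i)).card : ℝ)) / n

/-- `(z, c)` is a global minimizer of the k-means objective for the columns of `W * X`. -/
def IsKMeans {p n k : ℕ} (W : Matrix (Fin p) (Fin p) ℝ) (X : Matrix (Fin p) (Fin n) ℝ)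
    (z : Fin n → Fin k) (c : Fin k → Fin p → ℝ) : Prop :=
  ∀ (z' : Fin n → Fin k) (c' : Fin k → Fin p → ℝ),
    ∑ i, ∑ a, (W.mulVec (fun b => X b i) a - c (z i) a) ^ 2 ≤
      ∑ i, ∑ a, (W.mulVec (fun b => X b i) a - c' (z' i) a) ^ 2

/-!
The signal has rank at most `k`, so the gaps of the singular values force `λ̂_{r̂+1} ≤ k T + ‖E‖`;
averaging a column over its cluster then shows that every center loses at most `(k T + 2‖E‖) / √m`
under the projection `Û_{1:r̂} Û_{1:r̂}ᵀ`, where `m` is the size of the smallest cluster. As the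
projected noise has squared Frobenius norm at most `k ‖E‖²`, k-means recovers the projected centers
up to `3 k ‖E‖ / √m`, and a misclustered point must have projected noise of length about `Δ / 2`.
The gap `T` at `r̂` finally allows one to replace `Û_{1:r̂}` by `Û_{−i,1:r̂}`: deleting column `i`
is a rank-one update of the Gram operator, and the displacement of the leading subspace along `ε_i`
is controlled by the whitened column, which is short because `x_i` is a cluster average plus small
noise.
-/

/-! ### Left singular systems -/

open scoped InnerProductSpace InnerProduct

theorem le_of_mul_self_le_mul {a b : ℝ} (hb : 0 ≤ b) (h : a * a ≤ b * a) : a ≤ b := by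
  by_contra! hba
  exact h.not_gt (mul_lt_mul_of_pos_right hba (hb.trans_lt hba))

section SingularSystem

variable {F F' V : Type*} [NormedAddCommGroup F] [InnerProductSpace ℝ F] [CompleteSpace F]
  [NormedAddCommGroup F'] [InnerProductSpace ℝ F'] [CompleteSpace F']
  [NormedAddCommGroup V] [InnerProductSpace ℝ V] [FiniteDimensional ℝ V] {p : ℕ}

/-- The left half of a singular value decomposition of `A : F →L[ℝ] V`: an orthonormal basis of left
singular vectors together with the nonincreasing singular values. As in `SVDData`, the singular
values are 0-indexed and vanish from the dimension `p` of `V` on. -/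
structure LeftSingularSystem (A : F →L[ℝ] V) (p : ℕ) where
  basis : OrthonormalBasis (Fin p) ℝ V
  sv : ℕ → ℝ
  antitone_sv : Antitone sv
  sv_nonneg : ∀ l, 0 ≤ sv l
  sv_eq_zero : ∀ l, p ≤ l → sv l = 0
  apply_adjoint_basis : ∀ l, A ((A†) (basis l)) = sv l ^ 2 • basis l

namespace LeftSingularSystem

variable {A : F →L[ℝ] V} (L : LeftSingularSystem A p)

/-- The span of the leading `r` left singular vectors. -/
def leadingSpan (r : ℕ) : Submodule ℝ V :=
  Submodule.span ℝ (Set.range fun l : {l : Fin p // (l : ℕ) < r} => L.basis l)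

/-- The orthogonal projection onto the span of the leading `r` left singular vectors, written
`Û_{1:r} Û_{1:r}ᵀ` in matrix form. -/
def proj (r : ℕ) : V →L[ℝ] V := (L.leadingSpan r).starProjection

theorem inner_basis_proj (r : ℕ) (l : Fin p) (v : V) :
    ⟪L.basis l, L.proj r v⟫_ℝ = if (l : ℕ) < r then ⟪L.basis l, v⟫_ℝ else 0 := by
  rw [proj, ← Submodule.inner_starProjection_left_eq_right]
  split_ifs with h
  · have h_mem : L.basis l ∈ L.leadingSpan r := Submodule.subset_span ⟨⟨l, h⟩, rfl⟩
    rw [Submodule.starProjection_eq_self_iff.2 h_mem]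
  · have h_orth : L.basis l ∈ (L.leadingSpan r)ᗮ := by
      rw [leadingSpan, ← Submodule.span_singleton_le_iff_mem, ← Submodule.isOrtho_iff_le,
        Submodule.isOrtho_span]
      rintro _ rfl _ ⟨l', rfl⟩
      exact L.basis.orthonormal.2 fun h_eq => h (h_eq ▸ l'.2)
    rw [(Submodule.starProjection_apply_eq_zero_iff _).2 h_orth, inner_zero_left]

theorem inner_basis_sub_proj (r : ℕ) (l : Fin p) (v : V) :
    ⟪L.basis l, v - L.proj r v⟫_ℝ = if (l : ℕ) < r then 0 else ⟪L.basis l, v⟫_ℝ := by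
  rw [inner_sub_right, inner_basis_proj]
  split_ifs <;> simp

theorem proj_apply (r : ℕ) (v : V) :
    L.proj r v = ∑ l : Fin p, if (l : ℕ) < r then ⟪L.basis l, v⟫_ℝ • L.basis l else 0 := by
  rw [← L.basis.sum_repr' (L.proj r v)]
  refine Finset.sum_congr rfl fun l _ => ?_
  rw [inner_basis_proj]
  split_ifs <;> simp

theorem inner_proj_left (r : ℕ) (v w : V) : ⟪L.proj r v, w⟫_ℝ = ⟪v, L.proj r w⟫_ℝ :=
  Submodule.inner_starProjection_left_eq_right _ v w

theorem inner_proj_self (r : ℕ) (v : V) : ⟪L.proj r v, v⟫_ℝ = ‖L.proj r v‖ * ‖L.proj r v‖ := by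
  rw [← sq]
  exact Submodule.re_inner_starProjection_eq_normSq (L.leadingSpan r) v

theorem norm_proj_le (r : ℕ) (v : V) : ‖L.proj r v‖ ≤ ‖v‖ :=
  Submodule.norm_starProjection_apply_le _ v

theorem norm_sub_proj_le (r : ℕ) (v : V) : ‖v - L.proj r v‖ ≤ ‖v‖ := by
  have := Submodule.norm_starProjection_apply_le (L.leadingSpan r)ᗮ v
  rwa [Submodule.starProjection_orthogonal] at this

theorem inner_sub_proj_left (r : ℕ) (v w : V) :
    ⟪v - L.proj r v, w⟫_ℝ = ⟪v - L.proj r v, w - L.proj r w⟫_ℝ := by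
  rw [inner_sub_right, proj, Submodule.starProjection_inner_eq_zero _ _
    (Submodule.starProjection_apply_mem _ w), sub_zero]

theorem norm_sq_eq_sum (v : V) : ‖v‖ ^ 2 = ∑ l, ⟪L.basis l, v⟫_ℝ ^ 2 := by
  simp only [← L.basis.sum_sq_norm_inner_right v, Real.norm_eq_abs, sq_abs]

theorem norm_proj_sq (r : ℕ) (v : V) :
    ‖L.proj r v‖ ^ 2 =
      ∑ l ∈ Finset.univ.filter fun l : Fin p => (l : ℕ) < r, ⟪L.basis l, v⟫_ℝ ^ 2 := by
  rw [L.norm_sq_eq_sum, Finset.sum_filter]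
  refine Finset.sum_congr rfl fun l _ => ?_
  rw [inner_basis_proj]
  split_ifs <;> simp

theorem inner_adjoint_adjoint (v w : V) :
    ⟪(A†) v, (A†) w⟫_ℝ = ∑ l : Fin p, L.sv l ^ 2 * (⟪L.basis l, v⟫_ℝ * ⟪L.basis l, w⟫_ℝ) := by
  have h_coord (l : Fin p) : ⟪L.basis l, A ((A†) w)⟫_ℝ = L.sv l ^ 2 * ⟪L.basis l, w⟫_ℝ := by
    rw [← ContinuousLinearMap.adjoint_inner_left, ContinuousLinearMap.adjoint_inner_right,
      L.apply_adjoint_basis, real_inner_smul_left]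
  rw [ContinuousLinearMap.adjoint_inner_left, real_inner_comm, ← L.basis.sum_inner_mul_inner]
  refine Finset.sum_congr rfl fun l _ => ?_
  rw [real_inner_comm (L.basis l), h_coord]
  ring

theorem norm_adjoint_sq (v : V) :
    ‖(A†) v‖ ^ 2 = ∑ l : Fin p, L.sv l ^ 2 * ⟪L.basis l, v⟫_ℝ ^ 2 := by
  rw [← real_inner_self_eq_norm_sq, L.inner_adjoint_adjoint]
  simp only [sq]

theorem norm_adjoint_sub_proj_le (r : ℕ) (v : V) :
    ‖(A†) (v - L.proj r v)‖ ≤ L.sv r * ‖v - L.proj r v‖ := by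
  refine le_of_sq_le_sq ?_ (mul_nonneg (L.sv_nonneg r) (norm_nonneg _))
  rw [mul_pow, L.norm_adjoint_sq, L.norm_sq_eq_sum, Finset.mul_sum]
  refine Finset.sum_le_sum fun l _ => ?_
  rw [inner_basis_sub_proj]
  split_ifs with h
  · simp
  · gcongr
    exacts [L.sv_nonneg l, L.antitone_sv (not_lt.1 h)]

theorem norm_apply_sub_proj_le (r : ℕ) (q : F) : ‖A q - L.proj r (A q)‖ ≤ L.sv r * ‖q‖ := by
  set w := A q - L.proj r (A q) with hw
  have h_sq : ‖w‖ * ‖w‖ ≤ L.sv r * ‖q‖ * ‖w‖ := calc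
    ‖w‖ * ‖w‖ = ⟪(A†) w, q⟫_ℝ := by
      rw [ContinuousLinearMap.adjoint_inner_left, hw, inner_sub_proj_left,
        real_inner_self_eq_norm_mul_norm]
    _ ≤ ‖(A†) w‖ * ‖q‖ := real_inner_le_norm _ _
    _ ≤ L.sv r * ‖w‖ * ‖q‖ := by gcongr; exact L.norm_adjoint_sub_proj_le r (A q)
    _ = L.sv r * ‖q‖ * ‖w‖ := by ring
  exact le_of_mul_self_le_mul (mul_nonneg (L.sv_nonneg r) (norm_nonneg q)) h_sq

theorem inner_adjoint_sub_proj (r : ℕ) (v : V) :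
    ⟪(A†) (v - L.proj r v), (A†) v⟫_ℝ = ‖(A†) (v - L.proj r v)‖ ^ 2 := by
  rw [L.inner_adjoint_adjoint, L.norm_adjoint_sq]
  refine Finset.sum_congr rfl fun l _ => ?_
  rw [inner_basis_sub_proj]
  split_ifs <;> ring

theorem finrank_leadingSpan (r : ℕ) : Module.finrank ℝ (L.leadingSpan r) = min p r := by
  have h_indep : LinearIndependent ℝ fun l : {l : Fin p // (l : ℕ) < r} => L.basis l :=
    (L.basis.orthonormal.comp _ Subtype.val_injective).linearIndependent
  rw [leadingSpan, finrank_span_eq_card h_indep, Fintype.card_subtype, Fin.card_filter_val_lt]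

theorem sv_mul_norm_le_norm_adjoint {r : ℕ} {v : V} (hv : v ∈ L.leadingSpan (r + 1)) :
    L.sv r * ‖v‖ ≤ ‖(A†) v‖ := by
  refine le_of_sq_le_sq ?_ (norm_nonneg _)
  rw [mul_pow, L.norm_adjoint_sq, L.norm_sq_eq_sum, Finset.mul_sum]
  refine Finset.sum_le_sum fun l _ => ?_
  rw [← Submodule.starProjection_eq_self_iff.2 hv, ← proj, inner_basis_proj]
  split_ifs with h
  · gcongr
    exacts [L.sv_nonneg r, L.antitone_sv (Nat.lt_succ_iff.1 h)]
  · simp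

theorem sv_le_of_forall_mem_orthogonal {r : ℕ} {K : Submodule ℝ V} (hK : Module.finrank ℝ K ≤ r)
    {c : ℝ} (hc : 0 ≤ c) (h : ∀ w ∈ Kᗮ, ‖(A†) w‖ ≤ c * ‖w‖) : L.sv r ≤ c := by
  rcases le_or_gt p r with hr | hr
  · rwa [L.sv_eq_zero r hr]
  have h_not_disjoint : ¬ Disjoint (L.leadingSpan (r + 1)) Kᗮ := fun h_disj => by
    have h_le := Submodule.finrank_add_finrank_le_of_disjoint h_disj
    rw [L.finrank_leadingSpan] at h_le
    have h_add := K.finrank_add_finrank_orthogonal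
    omega
  obtain ⟨w, ⟨hw_lead, hw_orth⟩, hw0⟩ :=
    (Submodule.ne_bot_iff _).1 (mt disjoint_iff.2 h_not_disjoint)
  exact le_of_mul_le_mul_right
    ((L.sv_mul_norm_le_norm_adjoint hw_lead).trans (h w hw_orth)) (norm_pos_iff.2 hw0)

end LeftSingularSystem

/-! ### Whitening and rank-one updates -/

namespace LeftSingularSystem

variable {A : F →L[ℝ] V} (L : LeftSingularSystem A p)

/-- The truncated inverse square root `∑_{l < r} σ_l⁻¹ u_l u_lᵀ` of `A Aᵀ`. -/
def whiten (r : ℕ) : V →L[ℝ] V :=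
  ∑ l : Fin p, if (l : ℕ) < r then
    (L.sv l)⁻¹ • (innerSL ℝ (L.basis l)).smulRight (L.basis l) else 0

theorem inner_basis_whiten (r : ℕ) (l : Fin p) (v : V) :
    ⟪L.basis l, L.whiten r v⟫_ℝ = if (l : ℕ) < r then (L.sv l)⁻¹ * ⟪L.basis l, v⟫_ℝ else 0 := by
  have h_term (j : Fin p) : ⟪L.basis l, (if (j : ℕ) < r then
      (L.sv j)⁻¹ • (innerSL ℝ (L.basis j)).smulRight (L.basis j) else 0 : V →L[ℝ] V) v⟫_ℝ =
      if l = j then (if (j : ℕ) < r then (L.sv j)⁻¹ * ⟪L.basis j, v⟫_ℝ else 0) else 0 := by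
    split_ifs with hj hlj hlj <;>
      simp [real_inner_smul_right, orthonormal_iff_ite.1 L.basis.orthonormal, hlj]
  rw [whiten, _root_.sum_apply, inner_sum, Finset.sum_congr rfl fun j _ => h_term j,
    Finset.sum_ite_eq, if_pos (Finset.mem_univ l)]

theorem inner_whiten_right (r : ℕ) (v w : V) :
    ⟪v, L.whiten r w⟫_ℝ = ⟪L.whiten r v, w⟫_ℝ := by
  rw [← L.basis.sum_inner_mul_inner, ← L.basis.sum_inner_mul_inner]
  refine Finset.sum_congr rfl fun l _ => ?_
  rw [real_inner_comm _ (L.whiten r v), inner_basis_whiten, inner_basis_whiten,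
    real_inner_comm v]
  split_ifs <;> ring

theorem norm_adjoint_whiten_le (r : ℕ) (v : V) : ‖(A†) (L.whiten r v)‖ ≤ ‖v‖ := by
  refine le_of_sq_le_sq ?_ (norm_nonneg _)
  rw [L.norm_adjoint_sq, L.norm_sq_eq_sum]
  refine Finset.sum_le_sum fun l _ => ?_
  rw [inner_basis_whiten, ← mul_pow]
  split_ifs
  · rw [← mul_assoc, mul_pow]
    refine mul_le_of_le_one_left (sq_nonneg _) (pow_le_one₀ ?_ mul_inv_le_one)
    exact mul_nonneg (L.sv_nonneg l) (inv_nonneg.2 (L.sv_nonneg l))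
  · simp [sq_nonneg]

theorem norm_whiten_apply_le (r : ℕ) (q : F) : ‖L.whiten r (A q)‖ ≤ ‖q‖ := by
  set w := L.whiten r (A q)
  have h_sq : ‖w‖ * ‖w‖ ≤ ‖q‖ * ‖w‖ := calc
    ‖w‖ * ‖w‖ = ⟪(A†) (L.whiten r w), q⟫_ℝ := by
      rw [ContinuousLinearMap.adjoint_inner_left, ← inner_whiten_right,
        real_inner_self_eq_norm_mul_norm]
    _ ≤ ‖w‖ * ‖q‖ := (real_inner_le_norm _ _).trans (by gcongr; exact L.norm_adjoint_whiten_le r w)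
    _ = ‖q‖ * ‖w‖ := mul_comm _ _
  exact le_of_mul_self_le_mul (norm_nonneg q) h_sq

theorem norm_whiten_le {r : ℕ} {T : ℝ} (hT : 0 < T) (h_sv : ∀ l < r, T ≤ L.sv l) (v : V) :
    ‖L.whiten r v‖ ≤ ‖L.proj r v‖ / T := by
  rw [le_div_iff₀ hT]
  refine le_of_sq_le_sq ?_ (norm_nonneg _)
  rw [mul_pow, L.norm_sq_eq_sum, L.norm_sq_eq_sum (L.proj r v), Finset.sum_mul]
  refine Finset.sum_le_sum fun l _ => ?_
  rw [inner_basis_whiten, inner_basis_proj, ← mul_pow]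
  split_ifs with hl
  · rw [sq_le_sq, abs_mul, abs_mul, abs_inv, abs_of_pos hT, abs_of_nonneg (L.sv_nonneg l),
      mul_right_comm]
    exact mul_le_of_le_one_left (abs_nonneg _)
      (inv_mul_le_one_of_le₀ (h_sv l hl) (L.sv_nonneg l))
  · simp

theorem norm_whiten_apply_add_le {r : ℕ} {T : ℝ} (hT : 0 < T) (h_sv : ∀ l < r, T ≤ L.sv l)
    (q : F) (v : V) : ‖L.whiten r (A q + v)‖ ≤ ‖q‖ + ‖L.proj r v‖ / T := by
  rw [map_add]
  exact (norm_add_le _ _).trans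
    (add_le_add (L.norm_whiten_apply_le r q) (L.norm_whiten_le hT h_sv v))

end LeftSingularSystem

/-- `A Aᵀ = B Bᵀ + y yᵀ`: passing from `B` to `A` appends the column `y`. -/
def IsRankOneUpdate (A : F →L[ℝ] V) (B : F' →L[ℝ] V) (y : V) : Prop :=
  ∀ v, A ((A†) v) = B ((B†) v) + ⟪y, v⟫_ℝ • y

namespace IsRankOneUpdate

variable {A : F →L[ℝ] V} {B : F' →L[ℝ] V} {y : V} (h : IsRankOneUpdate A B y)
  (L : LeftSingularSystem A p) (L' : LeftSingularSystem B p)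

include h

theorem inner_adjoint_adjoint (v w : V) :
    ⟪(A†) v, (A†) w⟫_ℝ = ⟪(B†) v, (B†) w⟫_ℝ + ⟪y, v⟫_ℝ * ⟪y, w⟫_ℝ := by
  simp only [ContinuousLinearMap.adjoint_inner_left]
  rw [h w, inner_add_right, real_inner_smul_right, real_inner_comm v y]
  ring

theorem norm_adjoint_le (v : V) : ‖(B†) v‖ ≤ ‖(A†) v‖ := by
  refine le_of_sq_le_sq ?_ (norm_nonneg _)
  rw [← real_inner_self_eq_norm_sq, ← real_inner_self_eq_norm_sq, h.inner_adjoint_adjoint v v]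
  exact le_add_of_nonneg_right (mul_self_nonneg _)

theorem norm_le : ‖B‖ ≤ ‖A‖ := by
  rw [← LinearIsometryEquiv.norm_map ContinuousLinearMap.adjoint B,
    ← LinearIsometryEquiv.norm_map ContinuousLinearMap.adjoint A]
  exact (B†).opNorm_le_bound (norm_nonneg _) fun v => (h.norm_adjoint_le v).trans ((A†).le_opNorm v)

theorem sv_le (r : ℕ) : L'.sv r ≤ L.sv r := by
  refine L'.sv_le_of_forall_mem_orthogonal
    ((L.finrank_leadingSpan r).trans_le (min_le_right p r)) (L.sv_nonneg r) fun w hw => ?_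
  have h_proj : L.proj r w = 0 := (Submodule.starProjection_apply_eq_zero_iff _).2 hw
  simpa only [h_proj, sub_zero] using (h.norm_adjoint_le _).trans (L.norm_adjoint_sub_proj_le r w)

/- The eigenvector equation `A Aᵀ u = σ_l² u`, tested against the residual `M = u - Q u`, reads
`σ_l² ‖M‖² = ⟪y, M⟫ ⟪y, u⟫ + ‖Bᵀ M‖²`. -/
theorem sv_mul_norm_basis_sub_proj_le {r : ℕ} {T : ℝ} (hT : 0 < T)
    (hy : ‖y - L'.proj r y‖ ≤ T) {l : Fin p} (h_gap : T + L.sv r ≤ L.sv l) :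
    L.sv l * ‖L.basis l - L'.proj r (L.basis l)‖ ≤ |⟪L.basis l, y⟫_ℝ| := by
  set u := L.basis l with hu
  set M := u - L'.proj r u with hM
  rcases (norm_nonneg M).eq_or_lt with hM0 | hM0
  · rw [← hM0, mul_zero]
    exact abs_nonneg _
  have h_test : L.sv l ^ 2 * ‖M‖ ^ 2 = ‖(B†) M‖ ^ 2 + ⟪y, M⟫_ℝ * ⟪y, u⟫_ℝ := by
    rw [← L'.inner_adjoint_sub_proj, ← h.inner_adjoint_adjoint,
      ContinuousLinearMap.adjoint_inner_left, hu, L.apply_adjoint_basis, real_inner_smul_right,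
      ← hu, hM, L'.inner_sub_proj_left, real_inner_self_eq_norm_sq]
  have h_noise : ⟪y, M⟫_ℝ * ⟪y, u⟫_ℝ ≤ T * ‖M‖ * |⟪u, y⟫_ℝ| := by
    rw [real_inner_comm u y]
    refine (le_abs_self _).trans ?_
    rw [abs_mul]
    gcongr
    rw [real_inner_comm, hM, L'.inner_sub_proj_left, mul_comm]
    exact (abs_real_inner_le_norm _ _).trans (by gcongr)
  have h_tail : ‖(B†) M‖ ^ 2 ≤ L.sv r ^ 2 * ‖M‖ ^ 2 := by
    rw [← mul_pow]
    gcongr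
    exact (L'.norm_adjoint_sub_proj_le r u).trans (by gcongr; exact h.sv_le L L' r)
  have h_gap_sq : T * L.sv l ≤ L.sv l ^ 2 - L.sv r ^ 2 := by
    nlinarith [L.sv_nonneg r, mul_nonneg (L.sv_nonneg r) (sub_nonneg.2 h_gap)]
  have h_scaled : (T * ‖M‖) * (L.sv l * ‖M‖) ≤ (T * ‖M‖) * |⟪u, y⟫_ℝ| := by
    nlinarith [mul_le_mul_of_nonneg_right h_gap_sq (sq_nonneg ‖M‖)]
  exact le_of_mul_le_mul_left h_scaled (mul_pos hT hM0)

theorem inner_proj_sub_proj_le {r : ℕ} {T : ℝ} (hT : 0 < T) (hy : ‖y - L'.proj r y‖ ≤ T)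
    (h_gap : ∀ l < r, T + L.sv r ≤ L.sv l) (v : V) :
    ⟪L.proj r v - L'.proj r (L.proj r v), v⟫_ℝ ≤ ‖L.proj r v‖ * ‖L.whiten r y‖ * ‖v‖ := by
  have h_term (l : Fin p) :
      ⟪L.basis l, L.proj r v⟫_ℝ * ⟪L.basis l - L'.proj r (L.basis l), v⟫_ℝ ≤
        |⟪L.basis l, L.proj r v⟫_ℝ| * |⟪L.basis l, L.whiten r y⟫_ℝ| * ‖v‖ := by
    rw [L.inner_basis_whiten, L.inner_basis_proj]
    split_ifs with hl
    · have h_pos : 0 < L.sv l := by linarith [h_gap l hl, L.sv_nonneg r]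
      have h_residual : ‖L.basis l - L'.proj r (L.basis l)‖ ≤ |(L.sv l)⁻¹ * ⟪L.basis l, y⟫_ℝ| := by
        rw [abs_mul, abs_inv, abs_of_pos h_pos, inv_mul_eq_div, le_div_iff₀' h_pos]
        exact h.sv_mul_norm_basis_sub_proj_le L L' hT hy (h_gap l hl)
      refine (le_abs_self _).trans ?_
      rw [abs_mul, mul_assoc]
      gcongr
      exact (abs_real_inner_le_norm _ _).trans (by gcongr)
    · simp
  calc ⟪L.proj r v - L'.proj r (L.proj r v), v⟫_ℝ
      = ∑ l, ⟪L.basis l, L.proj r v⟫_ℝ * ⟪L.basis l - L'.proj r (L.basis l), v⟫_ℝ := by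
        conv_lhs => rw [← L.basis.sum_repr' (L.proj r v)]
        simp only [map_sum, map_smul, ← Finset.sum_sub_distrib, ← smul_sub, sum_inner,
          real_inner_smul_left]
    _ ≤ (∑ l, |⟪L.basis l, L.proj r v⟫_ℝ| * |⟪L.basis l, L.whiten r y⟫_ℝ|) * ‖v‖ := by
        rw [Finset.sum_mul]
        exact Finset.sum_le_sum fun l _ => h_term l
    _ ≤ ‖L.proj r v‖ * ‖L.whiten r y‖ * ‖v‖ := by
        gcongr
        refine le_of_sq_le_sq ?_ (by positivity)
        rw [mul_pow, L.norm_sq_eq_sum, L.norm_sq_eq_sum (L.whiten r y)]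
        simpa only [sq_abs] using Finset.sum_mul_sq_le_sq_mul_sq Finset.univ
          (fun l => |⟪L.basis l, L.proj r v⟫_ℝ|) (fun l => |⟪L.basis l, L.whiten r y⟫_ℝ|)

theorem norm_proj_le {r : ℕ} {T : ℝ} (hT : 0 < T) (hy : ‖y - L'.proj r y‖ ≤ T)
    (h_gap : ∀ l < r, T + L.sv r ≤ L.sv l) (v : V) :
    ‖L.proj r v‖ ≤ ‖L'.proj r v‖ + ‖L.whiten r y‖ * ‖v‖ := by
  have h_split : ⟪L.proj r v, v⟫_ℝ =
      ⟪L.proj r v, L'.proj r v⟫_ℝ + ⟪L.proj r v - L'.proj r (L.proj r v), v⟫_ℝ := by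
    rw [inner_sub_left, ← L'.inner_proj_left, add_sub_cancel]
  refine le_of_mul_self_le_mul (by positivity) ?_
  calc ‖L.proj r v‖ * ‖L.proj r v‖
      = ⟪L.proj r v, L'.proj r v⟫_ℝ + ⟪L.proj r v - L'.proj r (L.proj r v), v⟫_ℝ := by
        rw [← L.inner_proj_self, h_split]
    _ ≤ ‖L.proj r v‖ * ‖L'.proj r v‖ + ‖L.proj r v‖ * ‖L.whiten r y‖ * ‖v‖ :=
        add_le_add (real_inner_le_norm _ _) (h.inner_proj_sub_proj_le L L' hT hy h_gap v)
    _ = (‖L'.proj r v‖ + ‖L.whiten r y‖ * ‖v‖) * ‖L.proj r v‖ := by ring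

end IsRankOneUpdate
end SingularSystem

/-! ### Operators given by columns -/

open scoped Finset

section Columns

variable {ι κ V : Type*} [Fintype ι] [NormedAddCommGroup V] [InnerProductSpace ℝ V]

/-- The operator `q ↦ ∑ j, q j • x j`, whose matrix has the columns `x j`. -/
def columnMap (x : ι → V) : EuclideanSpace ℝ ι →L[ℝ] V :=
  LinearMap.toContinuousLinearMap
    (Fintype.linearCombination ℝ x ∘ₗ (WithLp.linearEquiv 2 ℝ (ι → ℝ)).toLinearMap)

theorem columnMap_apply (x : ι → V) (q : EuclideanSpace ℝ ι) :
    columnMap x q = ∑ j, q j • x j := rfl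

theorem columnMap_sub_apply (x y : ι → V) (q : EuclideanSpace ℝ ι) :
    columnMap (x - y) q = columnMap x q - columnMap y q := by
  simp only [columnMap_apply, Pi.sub_apply, smul_sub, Finset.sum_sub_distrib]

theorem norm_le_norm_columnMap (x : ι → V) (i : ι) : ‖x i‖ ≤ ‖columnMap x‖ := by
  classical
  have h := (columnMap x).le_opNorm (EuclideanSpace.single i 1)
  simpa [columnMap_apply, Pi.single_apply] using h

section Clusters

variable [DecidableEq κ]

/-- The coefficient vector averaging over the cluster `{i | z i = a}`. -/
def clusterAverage (z : ι → κ) (a : κ) : EuclideanSpace ℝ ι :=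
  WithLp.toLp 2 fun i => if z i = a then (#{j | z j = a} : ℝ)⁻¹ else 0

theorem norm_clusterAverage (z : ι → κ) (a : κ) :
    ‖clusterAverage z a‖ = (√(#{i | z i = a} : ℝ))⁻¹ := by
  rw [EuclideanSpace.norm_eq, ← Real.sqrt_inv]
  congr 1
  simp only [clusterAverage, Real.norm_eq_abs, sq_abs, ite_pow, zero_pow two_ne_zero,
    ← Finset.sum_filter, Finset.sum_const, nsmul_eq_mul]
  rcases eq_or_ne (#{i | z i = a} : ℝ) 0 with h | h
  · simp [h]
  · field_simp

theorem columnMap_clusterAverage {z : ι → κ} {a : κ} (θ : κ → V) (ha : #{i | z i = a} ≠ 0) :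
    columnMap (θ ∘ z) (clusterAverage z a) = θ a := by
  have h_term (i : ι) : (if z i = a then (#{j | z j = a} : ℝ)⁻¹ else 0) • θ (z i) =
      if z i = a then (#{j | z j = a} : ℝ)⁻¹ • θ a else 0 := by
    split_ifs with h
    · rw [h]
    · exact zero_smul ℝ _
  simp only [columnMap_apply, clusterAverage, Function.comp_apply, h_term]
  rw [← Finset.sum_filter, Finset.sum_const, ← Nat.cast_smul_eq_nsmul ℝ, smul_smul,
    mul_inv_cancel₀ (Nat.cast_ne_zero.2 ha), one_smul]

end Clusters

variable [FiniteDimensional ℝ V]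

theorem adjoint_columnMap_apply (x : ι → V) (v : V) (j : ι) :
    ((columnMap x)†) v j = ⟪x j, v⟫_ℝ := by
  classical
  have h := ContinuousLinearMap.adjoint_inner_right (columnMap x) (EuclideanSpace.single j 1) v
  simpa [columnMap_apply, EuclideanSpace.inner_single_left, Pi.single_apply] using h

theorem norm_adjoint_columnMap_sq (x : ι → V) (v : V) :
    ‖((columnMap x)†) v‖ ^ 2 = ∑ j, ⟪x j, v⟫_ℝ ^ 2 := by
  simp only [EuclideanSpace.norm_sq_eq, adjoint_columnMap_apply, Real.norm_eq_abs, sq_abs]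

theorem norm_adjoint_apply_le {F : Type*} [NormedAddCommGroup F] [InnerProductSpace ℝ F]
    [CompleteSpace F] (A : F →L[ℝ] V) (v : V) : ‖(A†) v‖ ≤ ‖A‖ * ‖v‖ :=
  ((A†).le_opNorm v).trans_eq (by rw [LinearIsometryEquiv.norm_map])

theorem isRankOneUpdate_columnMap {n : ℕ} (x : Fin (n + 1) → V) (i : Fin (n + 1)) :
    IsRankOneUpdate (columnMap x) (columnMap (x ∘ i.succAbove)) (x i) := fun v => by
  simp only [columnMap_apply, adjoint_columnMap_apply, Function.comp_apply]
  rw [Fin.sum_univ_succAbove _ i, add_comm]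

namespace LeftSingularSystem

variable {F : Type*} [NormedAddCommGroup F] [InnerProductSpace ℝ F] [CompleteSpace F] {p : ℕ}

theorem sum_norm_proj_sq_le {A : F →L[ℝ] V} (L : LeftSingularSystem A p) (r : ℕ) (x : ι → V) :
    ∑ j, ‖L.proj r (x j)‖ ^ 2 ≤ r * ‖columnMap x‖ ^ 2 := calc
  ∑ j, ‖L.proj r (x j)‖ ^ 2
      = ∑ l ∈ Finset.univ.filter fun l : Fin p => (l : ℕ) < r,
          ‖((columnMap x)†) (L.basis l)‖ ^ 2 := by
        simp only [norm_proj_sq, norm_adjoint_columnMap_sq, real_inner_comm (L.basis _)]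
        exact Finset.sum_comm
  _ ≤ ∑ l ∈ Finset.univ.filter fun l : Fin p => (l : ℕ) < r, ‖columnMap x‖ ^ 2 := by
        gcongr with l
        simpa using norm_adjoint_apply_le (columnMap x) (L.basis l)
  _ ≤ r * ‖columnMap x‖ ^ 2 := by
        rw [Finset.sum_const, nsmul_eq_mul, Fin.card_filter_val_lt]
        gcongr
        exact min_le_right p r

end LeftSingularSystem

namespace LeftSingularSystem

variable {x : ι → V} {p : ℕ} (L : LeftSingularSystem (columnMap x) p) (θ : κ → V) (z : ι → κ)

theorem norm_center_sub_proj_le [DecidableEq κ] (r : ℕ) {a : κ} (ha : #{i | z i = a} ≠ 0) :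
    ‖θ a - L.proj r (θ a)‖ ≤
      (L.sv r + ‖columnMap (x - θ ∘ z)‖) / √(#{i | z i = a} : ℝ) := by
  set q := clusterAverage z a
  set e := columnMap (x - θ ∘ z) q with he
  have h_center : θ a = columnMap x q - e := by
    rw [he, columnMap_sub_apply, columnMap_clusterAverage θ ha, sub_sub_cancel]
  calc ‖θ a - L.proj r (θ a)‖
      = ‖(columnMap x q - L.proj r (columnMap x q)) - (e - L.proj r e)‖ := by
        rw [h_center, map_sub, sub_sub_sub_comm]
    _ ≤ L.sv r * ‖q‖ + ‖columnMap (x - θ ∘ z)‖ * ‖q‖ :=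
        (norm_sub_le _ _).trans (add_le_add (L.norm_apply_sub_proj_le r q)
          ((L.norm_sub_proj_le r e).trans ((columnMap (x - θ ∘ z)).le_opNorm q)))
    _ = (L.sv r + ‖columnMap (x - θ ∘ z)‖) / √(#{i | z i = a} : ℝ) := by
        rw [norm_clusterAverage, ← add_mul, div_eq_mul_inv]

theorem norm_whiten_column_le [DecidableEq κ] {r : ℕ} {T : ℝ} (hT : 0 < T)
    (h_sv : ∀ l < r, T ≤ L.sv l) (i : ι) :
    ‖L.whiten r (x i)‖ ≤ (√(#{j | z j = z i} : ℝ))⁻¹ +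
      (‖L.proj r (x i - θ (z i))‖ + ‖columnMap (x - θ ∘ z)‖ / √(#{j | z j = z i} : ℝ)) / T := by
  have h_size : #{j | z j = z i} ≠ 0 :=
    (Finset.card_pos.2 ⟨i, by simp⟩).ne'
  set q := clusterAverage z (z i)
  have h_column : x i = columnMap x q + ((x i - θ (z i)) - columnMap (x - θ ∘ z) q) := by
    rw [columnMap_sub_apply, columnMap_clusterAverage θ h_size]
    abel
  have h_proj : ‖L.proj r ((x i - θ (z i)) - columnMap (x - θ ∘ z) q)‖ ≤
      ‖L.proj r (x i - θ (z i))‖ + ‖columnMap (x - θ ∘ z)‖ * ‖q‖ := by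
    rw [map_sub]
    exact (norm_sub_le _ _).trans
      (add_le_add_right ((L.norm_proj_le r _).trans (ContinuousLinearMap.le_opNorm _ q)) _)
  rw [div_eq_mul_inv ‖columnMap (x - θ ∘ z)‖, ← norm_clusterAverage]
  conv_lhs => rw [h_column]
  refine (L.norm_whiten_apply_add_le hT h_sv _ _).trans ?_
  gcongr

theorem sv_card_le [Fintype κ] : L.sv (Fintype.card κ) ≤ ‖columnMap (x - θ ∘ z)‖ := by
  refine L.sv_le_of_forall_mem_orthogonal (finrank_range_le_card θ) (norm_nonneg _) fun w hw => ?_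
  have h_center (a : κ) : ⟪θ a, w⟫_ℝ = 0 :=
    (Submodule.mem_orthogonal _ _).1 hw _ (Submodule.subset_span ⟨a, rfl⟩)
  have h_eq : ((columnMap x)†) w = ((columnMap (x - θ ∘ z))†) w := by
    ext j
    simp only [adjoint_columnMap_apply, Pi.sub_apply, Function.comp_apply, inner_sub_left,
      h_center, sub_zero]
  rw [h_eq]
  exact norm_adjoint_apply_le _ w

end LeftSingularSystem

end Columns

/-- The largest `a ∈ [k]` with `σ_a - σ_{a+1} ≥ T`, where `σ_a` is `sv (a - 1)` since `sv` is
0-indexed; it is `0` if there is no such `a`. -/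
def adaptiveRank (sv : ℕ → ℝ) (k : ℕ) (T : ℝ) : ℕ :=
  ((Finset.Icc 1 k).filter fun a => T ≤ sv (a - 1) - sv a).sup id

section AdaptiveRank

variable {sv : ℕ → ℝ} {k : ℕ} {T : ℝ}

theorem adaptiveRank_le (sv : ℕ → ℝ) (k : ℕ) (T : ℝ) : adaptiveRank sv k T ≤ k :=
  Finset.sup_le fun _ ha => (Finset.mem_Icc.1 (Finset.mem_filter.1 ha).1).2

theorem add_le_sv_of_lt_adaptiveRank (h_anti : Antitone sv) {l : ℕ}
    (hl : l < adaptiveRank sv k T) : T + sv (adaptiveRank sv k T) ≤ sv l := by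
  have h_nonempty : ((Finset.Icc 1 k).filter fun a => T ≤ sv (a - 1) - sv a).Nonempty := by
    by_contra! h_empty
    simp [adaptiveRank, h_empty] at hl
  obtain ⟨a, ha, h_sup⟩ := Finset.exists_mem_eq_sup _ h_nonempty id
  have h_eq : adaptiveRank sv k T = a := h_sup
  rw [h_eq] at hl ⊢
  linarith [h_anti (Nat.le_sub_one_of_lt hl), (Finset.mem_filter.1 ha).2]

theorem sv_adaptiveRank_le (hT : 0 ≤ T) : sv (adaptiveRank sv k T) ≤ k * T + sv k := by
  have h_gap {a : ℕ} (h_le : adaptiveRank sv k T ≤ a) (ha : a < k) : sv a ≤ T + sv (a + 1) := by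
    by_contra! h
    have h_mem : a + 1 ∈ (Finset.Icc 1 k).filter fun a => T ≤ sv (a - 1) - sv a := by
      simp only [Finset.mem_filter, Finset.mem_Icc, Nat.add_sub_cancel]
      exact ⟨⟨by omega, ha⟩, by linarith⟩
    exact (Nat.lt_succ_of_le h_le).not_ge (Finset.le_sup (f := id) h_mem)
  have h_iter (d : ℕ) (hd : adaptiveRank sv k T + d ≤ k) :
      sv (adaptiveRank sv k T) ≤ d * T + sv (adaptiveRank sv k T + d) := by
    induction d with
    | zero => simp
    | succ d ih =>
      rw [← add_assoc] at hd ⊢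
      push_cast
      linarith [ih (Nat.le_of_succ_le hd), h_gap (Nat.le_add_right _ d) hd]
  obtain ⟨d, hd⟩ := Nat.exists_eq_add_of_le (adaptiveRank_le sv k T)
  have h_le : (d : ℝ) * T ≤ k * T := by
    gcongr
    omega
  have h_total := h_iter d hd.ge
  rw [← hd] at h_total
  linarith

end AdaptiveRank

theorem LeftSingularSystem.sv_adaptiveRank_card_le {ι κ V : Type*} [Fintype ι] [Fintype κ]
    [NormedAddCommGroup V] [InnerProductSpace ℝ V] [FiniteDimensional ℝ V] {x : ι → V} {p : ℕ}
    (L : LeftSingularSystem (columnMap x) p) (θ : κ → V) (z : ι → κ) {T : ℝ} (hT : 0 ≤ T) :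
    L.sv (adaptiveRank L.sv (Fintype.card κ) T) ≤
      Fintype.card κ * T + ‖columnMap (x - θ ∘ z)‖ :=
  (sv_adaptiveRank_le hT).trans (add_le_add_right (L.sv_card_le θ z) _)

/-! ### k-means -/

section KMeans

variable {ι κ E : Type*} [Fintype ι] [SeminormedAddCommGroup E]

/-- `(w, c)` is a global minimizer of the k-means objective for the points `x`. -/
def IsKMeansMinimizer (x : ι → E) (w : ι → κ) (c : κ → E) : Prop :=
  ∀ (w' : ι → κ) (c' : κ → E), ∑ i, ‖x i - c (w i)‖ ^ 2 ≤ ∑ i, ‖x i - c' (w' i)‖ ^ 2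

namespace IsKMeansMinimizer

variable {x : ι → E} {w : ι → κ} {c : κ → E}

theorem sum_norm_sub_sq_le (h : IsKMeansMinimizer x w c) (t : κ → E) (z : ι → κ) :
    ∑ i, ‖c (w i) - t (z i)‖ ^ 2 ≤ 4 * ∑ i, ‖x i - t (z i)‖ ^ 2 := by
  have h_term (i : ι) :
      ‖c (w i) - t (z i)‖ ^ 2 ≤ 2 * (‖x i - c (w i)‖ ^ 2 + ‖x i - t (z i)‖ ^ 2) := calc
    ‖c (w i) - t (z i)‖ ^ 2 = ‖(x i - t (z i)) - (x i - c (w i))‖ ^ 2 := by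
      rw [sub_sub_sub_cancel_left]
    _ ≤ (‖x i - c (w i)‖ + ‖x i - t (z i)‖) ^ 2 := by
      gcongr
      exact (norm_sub_le _ _).trans_eq (add_comm _ _)
    _ ≤ 2 * (‖x i - c (w i)‖ ^ 2 + ‖x i - t (z i)‖ ^ 2) := add_sq_le
  calc ∑ i, ‖c (w i) - t (z i)‖ ^ 2
      ≤ 2 * (∑ i, ‖x i - c (w i)‖ ^ 2 + ∑ i, ‖x i - t (z i)‖ ^ 2) := by
        rw [← Finset.sum_add_distrib, Finset.mul_sum]
        exact Finset.sum_le_sum fun i _ => h_term i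
    _ ≤ 4 * ∑ i, ‖x i - t (z i)‖ ^ 2 := by linarith [h z t]

theorem norm_sub_le_norm_sub (h : IsKMeansMinimizer x w c) (i : ι) (a : κ) :
    ‖x i - c (w i)‖ ≤ ‖x i - c a‖ := by
  classical
  refine le_of_sq_le_sq ?_ (norm_nonneg _)
  have h_update := h (Function.update w i a) c
  have h_rest : ∑ j ∈ Finset.univ.erase i, ‖x j - c (Function.update w i a j)‖ ^ 2 =
      ∑ j ∈ Finset.univ.erase i, ‖x j - c (w j)‖ ^ 2 :=
    Finset.sum_congr rfl fun j hj => by rw [Function.update_of_ne (Finset.ne_of_mem_erase hj)]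
  rw [← Finset.add_sum_erase _ _ (Finset.mem_univ i),
    ← Finset.add_sum_erase _ _ (Finset.mem_univ i), h_rest, Function.update_self] at h_update
  exact le_of_add_le_add_right h_update

end IsKMeansMinimizer

variable {w z : ι → κ} {c t : κ → E} {σ : Equiv.Perm κ} {η G m : ℝ}

theorem card_mul_sq_le_sum {s : Finset ι} {f : ι → ℝ} (hη : 0 ≤ η) (h : ∀ i ∈ s, η ≤ f i) :
    #s * η ^ 2 ≤ ∑ i, f i ^ 2 := calc
  #s * η ^ 2 = ∑ _i ∈ s, η ^ 2 := by rw [Finset.sum_const, nsmul_eq_mul]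
  _ ≤ ∑ i ∈ s, f i ^ 2 := Finset.sum_le_sum fun i hi => pow_le_pow_left₀ hη (h i hi) 2
  _ ≤ ∑ i, f i ^ 2 := Finset.sum_le_univ_sum_of_nonneg fun i => sq_nonneg _

theorem exists_center_near [DecidableEq κ] (hη : 0 ≤ η) (a : κ)
    (h_sum : ∑ i, ‖c (w i) - t (z i)‖ ^ 2 < #{i | z i = a} * η ^ 2) :
    ∃ b, ‖c b - t a‖ ≤ η := by
  by_contra! h_far
  refine h_sum.not_ge (card_mul_sq_le_sum hη fun i hi => ?_)
  rw [(Finset.mem_filter.1 hi).2]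
  exact (h_far (w i)).le

theorem exists_perm_centers_near [Finite κ] (h_sep : ∀ a b, a ≠ b → 2 * η < ‖t a - t b‖)
    (h_near : ∀ a, ∃ b, ‖c b - t a‖ ≤ η) : ∃ σ : Equiv.Perm κ, ∀ a, ‖c (σ a) - t a‖ ≤ η := by
  choose s hs using h_near
  have h_inj : Function.Injective s := fun a b hab => by
    by_contra h_ne
    have h_tri := norm_sub_le (c (s b) - t b) (c (s b) - t a)
    rw [sub_sub_sub_cancel_left] at h_tri
    linarith [h_sep a b h_ne, hs b, hab ▸ hs a]
  exact ⟨Equiv.ofBijective s (Finite.injective_iff_bijective.1 h_inj), hs⟩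

theorem exists_ne_apply_eq_of_ne_apply {a b : κ} (h : b ≠ σ a) : ∃ a' ≠ a, σ a' = b :=
  ⟨σ.symm b, fun h_eq => h (by rw [← h_eq, σ.apply_symm_apply]), σ.apply_symm_apply b⟩

theorem sub_le_norm_center_sub (h_sep : ∀ a b, a ≠ b → G ≤ ‖t a - t b‖)
    (hσ : ∀ a, ‖c (σ a) - t a‖ ≤ η) {a b : κ} (hb : b ≠ σ a) : G - η ≤ ‖c b - t a‖ := by
  obtain ⟨a', h_ne, rfl⟩ := exists_ne_apply_eq_of_ne_apply hb
  have h_tri := norm_sub_le (c (σ a') - t a) (c (σ a') - t a')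
  rw [sub_sub_sub_cancel_left] at h_tri
  linarith [h_sep a' a h_ne, hσ a']

theorem perm_eq_of_two_mul_card_lt [DecidableEq κ] {φ : Equiv.Perm κ}
    (hm : ∀ a, m ≤ #{i | z i = a}) (h_le : #{i | w i ≠ φ (z i)} ≤ #{i | w i ≠ σ (z i)})
    (h_lt : 2 * (#{i | w i ≠ σ (z i)} : ℝ) < m) : φ = σ := by
  classical
  ext a
  by_contra h_ne
  have h_cover : ({i | z i = a} : Finset ι) ⊆
      ({i | w i ≠ φ (z i)} : Finset ι) ∪ ({i | w i ≠ σ (z i)} : Finset ι) := fun i hi => by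
    simp only [Finset.mem_union, Finset.mem_filter, Finset.mem_univ, true_and] at hi ⊢
    by_contra! h_eq
    exact h_ne (hi ▸ h_eq.1.symm.trans h_eq.2)
  have h_card : (#{i | z i = a} : ℝ) ≤ #{i | w i ≠ φ (z i)} + #{i | w i ≠ σ (z i)} :=
    mod_cast (Finset.card_le_card h_cover).trans (Finset.card_union_le _ _)
  have h_le' : (#{i | w i ≠ φ (z i)} : ℝ) ≤ #{i | w i ≠ σ (z i)} := mod_cast h_le
  linarith [hm a]

theorem IsKMeansMinimizer.sub_le_two_mul_norm_sub [Finite κ] [DecidableEq κ] {x : ι → E}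
    (h : IsKMeansMinimizer x w c) {φ : Equiv.Perm κ}
    (hφ : ∀ σ : Equiv.Perm κ, #{i | w i ≠ φ (z i)} ≤ #{i | w i ≠ σ (z i)})
    (hm : ∀ a, m ≤ #{i | z i = a}) (hη : 0 < η) (hG : 4 * η ≤ G)
    (h_sep : ∀ a b, a ≠ b → G ≤ ‖t a - t b‖)
    (h_noise : 4 * ∑ i, ‖x i - t (z i)‖ ^ 2 < m * η ^ 2) {i : ι} (hi : w i ≠ φ (z i)) :
    G - 2 * η ≤ 2 * ‖x i - t (z i)‖ := by
  have h_sum : ∑ i, ‖c (w i) - t (z i)‖ ^ 2 < m * η ^ 2 :=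
    (h.sum_norm_sub_sq_le t z).trans_lt h_noise
  obtain ⟨σ, hσ⟩ : ∃ σ : Equiv.Perm κ, ∀ a, ‖c (σ a) - t a‖ ≤ η :=
    exists_perm_centers_near (fun a b hab => by linarith [h_sep a b hab]) fun a =>
      exists_center_near hη.le a (h_sum.trans_le (by gcongr; exact hm a))
  have h_far {i : ι} (hi : w i ≠ σ (z i)) : 3 * η ≤ ‖c (w i) - t (z i)‖ := by
    linarith [sub_le_norm_center_sub h_sep hσ hi]
  have h_card : 2 * (#{i | w i ≠ σ (z i)} : ℝ) < m := by
    have h_count : (#{i | w i ≠ σ (z i)} : ℝ) * (3 * η) ^ 2 ≤ ∑ i, ‖c (w i) - t (z i)‖ ^ 2 :=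
      card_mul_sq_le_sum (by positivity) fun i hi => h_far (Finset.mem_filter.1 hi).2
    nlinarith [sq_pos_of_pos hη, Nat.cast_nonneg (α := ℝ) #{i | w i ≠ σ (z i)}]
  rw [perm_eq_of_two_mul_card_lt hm (hφ σ) h_card] at hi
  have h_sep_i := sub_le_norm_center_sub h_sep hσ hi
  have h_near := norm_sub_le (x i - t (z i)) (c (σ (z i)) - t (z i))
  have h_tri := norm_sub_le (x i - t (z i)) (x i - c (w i))
  rw [sub_sub_sub_cancel_right] at h_near
  rw [sub_sub_sub_cancel_left] at h_tri
  linarith [h.norm_sub_le_norm_sub i (σ (z i)), hσ (z i)]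

end KMeans

/-! ### The leave-one-out comparison -/

theorem card_fiber_le_card_fiber_succAbove_add_one {κ : Type*} [DecidableEq κ] {n : ℕ}
    (z : Fin (n + 1) → κ) (i : Fin (n + 1)) (a : κ) :
    #{j | z j = a} ≤ #{j | z (i.succAbove j) = a} + 1 := by
  simp only [Finset.card_filter, Fin.sum_univ_succAbove _ i]
  split_ifs <;> omega

section LeaveOneOut

variable {κ V : Type*} [DecidableEq κ] [NormedAddCommGroup V] [InnerProductSpace ℝ V]
  [FiniteDimensional ℝ V] {n p : ℕ} {x : Fin (n + 1) → V} {i : Fin (n + 1)}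
  (L : LeftSingularSystem (columnMap x) p)
  (L' : LeftSingularSystem (columnMap (x ∘ i.succAbove)) p)
  (θ : κ → V) (z : Fin (n + 1) → κ) {r : ℕ} {T : ℝ}

include L in
theorem norm_column_sub_leaveOneOut_proj_le [Fintype κ]
    (h_size : 5 * Fintype.card κ ^ 2 ≤ #{j | z j = z i})
    (h_sv : L.sv r ≤ Fintype.card κ * T + ‖columnMap (x - θ ∘ z)‖)
    (hT : 4 * ‖columnMap (x - θ ∘ z)‖ ≤ T) : ‖x i - L'.proj r (x i)‖ ≤ T := by
  set e := ‖columnMap (x - θ ∘ z)‖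
  have he : 0 ≤ e := norm_nonneg _
  have hT_nonneg : 0 ≤ T := by linarith
  have h_noise : ‖x i - θ (z i)‖ ≤ e := norm_le_norm_columnMap (x - θ ∘ z) i
  set k := Fintype.card κ
  have hk : 1 ≤ k := Fintype.card_pos_iff.2 ⟨z i⟩
  have hk' : (1 : ℝ) ≤ k := mod_cast hk
  have h_rest : (2 * k) ^ 2 ≤ #{j | z (i.succAbove j) = z i} := by
    nlinarith [card_fiber_le_card_fiber_succAbove_add_one z i (z i)]
  have h_sqrt : (2 * k : ℝ) ≤ √(#{j | z (i.succAbove j) = z i} : ℝ) :=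
    Real.le_sqrt_of_sq_le (mod_cast h_rest)
  have h_noise_rest : ‖columnMap (x ∘ i.succAbove - θ ∘ (z ∘ i.succAbove))‖ ≤ e :=
    (isRankOneUpdate_columnMap (x - θ ∘ z) i).norm_le
  have h_center : ‖θ (z i) - L'.proj r (θ (z i))‖ ≤ T / 2 + e := calc
    ‖θ (z i) - L'.proj r (θ (z i))‖
        ≤ (L'.sv r + ‖columnMap (x ∘ i.succAbove - θ ∘ (z ∘ i.succAbove))‖) /
            √(#{j | z (i.succAbove j) = z i} : ℝ) :=
          L'.norm_center_sub_proj_le θ (z ∘ i.succAbove) r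
            ((by positivity : 0 < (2 * k) ^ 2).trans_le h_rest).ne'
    _ ≤ ((k * T + e) + e) / (2 * k) := by
          refine div_le_div₀ (by positivity) ?_ (by positivity) h_sqrt
          exact add_le_add (((isRankOneUpdate_columnMap x i).sv_le L L' r).trans h_sv) h_noise_rest
    _ ≤ T / 2 + e := by
          rw [div_le_iff₀ (by positivity)]
          nlinarith
  have h_split : x i - L'.proj r (x i) = (θ (z i) - L'.proj r (θ (z i))) +
      ((x i - θ (z i)) - L'.proj r (x i - θ (z i))) := by
    rw [map_sub]
    abel
  rw [h_split]
  refine (norm_add_le _ _).trans ?_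
  linarith [L'.norm_sub_proj_le r (x i - θ (z i))]

theorem norm_proj_noise_le (hT : ‖columnMap (x - θ ∘ z)‖ ≤ T) (hT_pos : 0 < T)
    (h_gap : ∀ l < r, T + L.sv r ≤ L.sv l) (h_column : ‖x i - L'.proj r (x i)‖ ≤ T) :
    (1 - ‖columnMap (x - θ ∘ z)‖ / T) * ‖L.proj r (x i - θ (z i))‖ ≤
      ‖L'.proj r (x i - θ (z i))‖ +
        2 * (‖columnMap (x - θ ∘ z)‖ / √(#{j | z j = z i} : ℝ)) := by
  set e := ‖columnMap (x - θ ∘ z)‖ with he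
  set R := (√(#{j | z j = z i} : ℝ))⁻¹ with hR
  set w := ‖L.proj r (x i - θ (z i))‖
  have h_update := (isRankOneUpdate_columnMap x i).norm_proj_le L L' hT_pos h_column h_gap
    (x i - θ (z i))
  have h_ratio : e / T ≤ 1 := (div_le_one hT_pos).2 hT
  have h_whiten : ‖L.whiten r (x i)‖ * ‖x i - θ (z i)‖ ≤ e / T * w + 2 * (e * R) := calc
    ‖L.whiten r (x i)‖ * ‖x i - θ (z i)‖ ≤ (R + (w + e * R) / T) * e := by
      gcongr
      · exact L.norm_whiten_column_le θ z hT_pos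
          (fun l hl => by linarith [h_gap l hl, L.sv_nonneg r]) i
      · exact norm_le_norm_columnMap (x - θ ∘ z) i
    _ = e / T * w + (1 + e / T) * (e * R) := by field_simp; ring
    _ ≤ e / T * w + 2 * (e * R) := by
      gcongr
      linarith
  rw [div_eq_mul_inv e √_]
  linarith

end LeaveOneOut

section Misclustering

variable {κ V : Type*} [DecidableEq κ] [NormedAddCommGroup V] [InnerProductSpace ℝ V]

theorem IsKMeansMinimizer.le_two_mul_norm_proj_noise [Finite κ] {ι : Type*} [Fintype ι] {x : ι → V}
    {P : V →L[ℝ] V} {θ : κ → V} {z w : ι → κ} {c : κ → V} {φ : Equiv.Perm κ} {m δ η G : ℝ}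
    (h : IsKMeansMinimizer (fun j => P (x j)) w c)
    (hφ : ∀ σ : Equiv.Perm κ, #{i | w i ≠ φ (z i)} ≤ #{i | w i ≠ σ (z i)})
    (hm : ∀ a, m ≤ #{i | z i = a}) (hη : 0 < η) (hG : 4 * η + 2 * δ ≤ G)
    (h_sep : ∀ a b, a ≠ b → G ≤ ‖θ a - θ b‖) (h_center : ∀ a, ‖θ a - P (θ a)‖ ≤ δ)
    (h_noise : 4 * ∑ j, ‖P (x j - θ (z j))‖ ^ 2 < m * η ^ 2) {i : ι} (hi : w i ≠ φ (z i)) :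
    G - 2 * δ - 2 * η ≤ 2 * ‖P (x i - θ (z i))‖ := by
  have h_sep_proj (a b : κ) (hab : a ≠ b) : G - 2 * δ ≤ ‖P (θ a) - P (θ b)‖ := by
    have h_tri := norm_sub_le (θ a - P (θ a)) (θ b - P (θ b))
    rw [sub_sub_sub_comm] at h_tri
    linarith [h_sep a b hab, h_center a, h_center b,
      norm_sub_norm_le (θ a - θ b) (P (θ a) - P (θ b))]
  simp only [map_sub] at h_noise ⊢
  exact h.sub_le_two_mul_norm_sub (t := fun a => P (θ a)) hφ hm hη (by linarith) h_sep_proj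
    h_noise hi

variable [Fintype κ] [FiniteDimensional ℝ V] {p : ℕ}

theorem LeftSingularSystem.norm_center_sub_proj_adaptiveRank_le {ι : Type*} [Fintype ι]
    {x : ι → V} (L : LeftSingularSystem (columnMap x) p) (θ : κ → V) (z : ι → κ) {T m : ℝ}
    (hT : 0 ≤ T) (hm : 0 < m) (a : κ) (h_size : m ≤ #{j | z j = a}) :
    ‖θ a - L.proj (adaptiveRank L.sv (Fintype.card κ) T) (θ a)‖ ≤
      (Fintype.card κ * T + 2 * ‖columnMap (x - θ ∘ z)‖) / √m := by
  have h_card : #{j | z j = a} ≠ 0 := fun h => by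
    rw [h] at h_size
    exact (hm.trans_le h_size).ne' Nat.cast_zero
  refine (L.norm_center_sub_proj_le θ z _ h_card).trans ?_
  refine div_le_div₀ (by positivity) ?_ (Real.sqrt_pos.2 hm) (Real.sqrt_le_sqrt h_size)
  linarith [L.sv_adaptiveRank_card_le θ z hT]

theorem sub_mul_le_two_mul_of_leaveOneOut {ρ ψ Δ d s P Q : ℝ} (hρ : 14 ≤ ρ) (hψ : 0 < ψ)
    (hd : 0 ≤ d) (h_sd : s ≤ d) (hΔ : ψ * d ≤ Δ) (hP : Δ - (2 * ρ + 10) * d ≤ 2 * P)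
    (hQ : (1 - ρ⁻¹) * P ≤ Q + 2 * s) : (1 - 3 * (ρ * ψ⁻¹ + ρ⁻¹)) * Δ ≤ 2 * Q := by
  have hρ_pos : 0 < ρ := by linarith
  have h_inv_pos : 0 < ρ⁻¹ := inv_pos.2 hρ_pos
  have h_inv_le : ρ⁻¹ ≤ 1 := inv_le_one_of_one_le₀ (by linarith)
  have hΔ_nonneg : 0 ≤ Δ := (mul_nonneg hψ.le hd).trans hΔ
  have hd_le : d ≤ ψ⁻¹ * Δ := by rwa [inv_mul_eq_div, le_div_iff₀ hψ, mul_comm]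
  calc (1 - 3 * (ρ * ψ⁻¹ + ρ⁻¹)) * Δ
      = Δ - 3 * (ρ⁻¹ * Δ) - 3 * ρ * (ψ⁻¹ * Δ) := by ring
    _ ≤ Δ - ρ⁻¹ * Δ - 3 * ρ * d := by
        have : 3 * ρ * d ≤ 3 * ρ * (ψ⁻¹ * Δ) := by gcongr
        linarith [mul_nonneg h_inv_pos.le hΔ_nonneg]
    _ ≤ (1 - ρ⁻¹) * (Δ - (2 * ρ + 10) * d) - 4 * s := by
        have : 0 ≤ ρ⁻¹ * ((2 * ρ + 10) * d) := by positivity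
        linarith [mul_le_mul_of_nonneg_right hρ hd]
    _ ≤ (1 - ρ⁻¹) * (2 * P) - 4 * s := by gcongr
    _ ≤ 2 * Q := by linarith

section AdaptiveSpectralClustering

variable {n : ℕ} {x : Fin (n + 1) → V} {L : LeftSingularSystem (columnMap x) p}
  {θ : κ → V} {z w : Fin (n + 1) → κ} {c : κ → V} {φ : Equiv.Perm κ} {T ρ ψ m Δ : ℝ}

theorem IsKMeansMinimizer.sub_le_two_mul_norm_adaptive_proj_noise
    (h : IsKMeansMinimizer
      (fun j => L.proj (adaptiveRank L.sv (Fintype.card κ) T) (x j)) w c)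
    (hφ : ∀ σ : Equiv.Perm κ, #{i | w i ≠ φ (z i)} ≤ #{i | w i ≠ σ (z i)})
    (hm_pos : 0 < m) (hm : ∀ a, m ≤ #{i | z i = a})
    (h_pos : 0 < ‖columnMap (x - θ ∘ z)‖) (hT : T = ρ * ‖columnMap (x - θ ∘ z)‖)
    (hρ : 16 ≤ ρ) (h_sep : ∀ a b, a ≠ b → Δ ≤ ‖θ a - θ b‖)
    (hΔ : 3 * ρ * (Fintype.card κ * (‖columnMap (x - θ ∘ z)‖ / √m)) ≤ Δ)
    {i : Fin (n + 1)} (hi : w i ≠ φ (z i)) :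
    Δ - (2 * ρ + 10) * (Fintype.card κ * (‖columnMap (x - θ ∘ z)‖ / √m)) ≤
      2 * ‖L.proj (adaptiveRank L.sv (Fintype.card κ) T) (x i - θ (z i))‖ := by
  have hk : (1 : ℝ) ≤ Fintype.card κ := mod_cast Fintype.card_pos_iff.2 ⟨z i⟩
  set k : ℝ := (Fintype.card κ : ℝ)
  set e := ‖columnMap (x - θ ∘ z)‖
  set s := e / √m with hs
  set r := adaptiveRank L.sv (Fintype.card κ) T
  have hs_pos : 0 < s := by positivity
  have h_ks : s ≤ k * s := le_mul_of_one_le_left hs_pos.le hk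
  have h_es : m * s ^ 2 = e ^ 2 := by
    rw [hs, div_pow, Real.sq_sqrt hm_pos.le, mul_div_cancel₀ _ hm_pos.ne']
  have h_center (a : κ) : ‖θ a - L.proj r (θ a)‖ ≤ (ρ + 2) * (k * s) := calc
    ‖θ a - L.proj r (θ a)‖ ≤ (k * T + 2 * e) / √m :=
      L.norm_center_sub_proj_adaptiveRank_le θ z (hT ▸ by positivity) hm_pos a (hm a)
    _ = ρ * (k * s) + 2 * s := by rw [hT, hs]; ring
    _ ≤ (ρ + 2) * (k * s) := by linarith
  have h_noise : 4 * ∑ j, ‖L.proj r (x j - θ (z j))‖ ^ 2 < m * (3 * (k * s)) ^ 2 := calc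
    4 * ∑ j, ‖L.proj r (x j - θ (z j))‖ ^ 2 ≤ 4 * (r * e ^ 2) := by
      gcongr
      exact L.sum_norm_proj_sq_le r (x - θ ∘ z)
    _ ≤ 4 * (k * e ^ 2) := by
      gcongr
      exact Nat.cast_le.2 (adaptiveRank_le _ _ _)
    _ < 9 * (k * (k * e ^ 2)) := by
      have h_pos' : 0 < k * e ^ 2 := by positivity
      linarith [mul_le_mul_of_nonneg_right hk h_pos'.le]
    _ = m * (3 * (k * s)) ^ 2 := by rw [← h_es]; ring
  have h_far := h.le_two_mul_norm_proj_noise (δ := (ρ + 2) * (k * s)) hφ hm (by positivity)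
    (by nlinarith) h_sep h_center h_noise hi
  linarith

theorem IsKMeansMinimizer.le_two_mul_norm_leaveOneOut_proj_noise
    (h : IsKMeansMinimizer
      (fun j => L.proj (adaptiveRank L.sv (Fintype.card κ) T) (x j)) w c)
    (hφ : ∀ σ : Equiv.Perm κ, #{i | w i ≠ φ (z i)} ≤ #{i | w i ≠ σ (z i)})
    (hm_size : 5 * (Fintype.card κ : ℝ) ^ 2 ≤ m) (hm : ∀ a, m ≤ #{i | z i = a})
    (h_pos : 0 < ‖columnMap (x - θ ∘ z)‖) (hT : T = ρ * ‖columnMap (x - θ ∘ z)‖)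
    (hρ : 16 ≤ ρ) (hψ : 3 * ρ ≤ ψ) (h_sep : ∀ a b, a ≠ b → Δ ≤ ‖θ a - θ b‖)
    (hΔ : ψ * (Fintype.card κ * ‖columnMap (x - θ ∘ z)‖) ≤ Δ * √m)
    {i : Fin (n + 1)} (L' : LeftSingularSystem (columnMap (x ∘ i.succAbove)) p)
    (hi : w i ≠ φ (z i)) :
    (1 - 3 * (ρ * ψ⁻¹ + ρ⁻¹)) * Δ ≤
      2 * ‖L'.proj (adaptiveRank L.sv (Fintype.card κ) T) (x i - θ (z i))‖ := by
  have hk : (1 : ℝ) ≤ Fintype.card κ := mod_cast Fintype.card_pos_iff.2 ⟨z i⟩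
  have hm_pos : 0 < m := lt_of_lt_of_le (by positivity) hm_size
  have hm_sqrt : 0 < √m := Real.sqrt_pos.2 hm_pos
  have h_size : 5 * Fintype.card κ ^ 2 ≤ #{j | z j = z i} :=
    mod_cast hm_size.trans (hm (z i))
  set k : ℝ := (Fintype.card κ : ℝ)
  set e := ‖columnMap (x - θ ∘ z)‖ with he
  have hT_pos : 0 < T := hT ▸ by positivity
  have hT_ge : 16 * e ≤ T := hT ▸ mul_le_mul_of_nonneg_right hρ h_pos.le
  have hs : 0 ≤ e / √m := by positivity
  have hΔ' : ψ * (k * (e / √m)) ≤ Δ := by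
    rwa [← mul_div_assoc, ← mul_div_assoc, div_le_iff₀ hm_sqrt]
  have h_kmeans := h.sub_le_two_mul_norm_adaptive_proj_noise hφ hm_pos hm h_pos hT hρ h_sep
    ((mul_le_mul_of_nonneg_right hψ (by positivity)).trans hΔ') hi
  have h_column := norm_column_sub_leaveOneOut_proj_le L L' θ z h_size
    (L.sv_adaptiveRank_card_le θ z hT_pos.le) (by linarith)
  have h_leaveOneOut := norm_proj_noise_le L L' θ z (by linarith) hT_pos
    (fun l hl => add_le_sv_of_lt_adaptiveRank L.antitone_sv hl) h_column
  have h_ratio : e / T = ρ⁻¹ := by rw [hT]; field_simp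
  rw [← he, h_ratio] at h_leaveOneOut
  refine sub_mul_le_two_mul_of_leaveOneOut (by linarith) (by linarith) (by positivity)
    (le_mul_of_one_le_left hs hk) hΔ' h_kmeans (h_leaveOneOut.trans ?_)
  gcongr
  exact hm (z i)

end AdaptiveSpectralClustering

end Misclustering

/-! ### Singular value decompositions of matrices -/

section EuclideanColumns

variable {ι : Type*} {p q n : ℕ}

/-- The `j`-th column of a real matrix, as a vector of the Euclidean space. -/
def euclideanCol (A : Matrix (Fin p) ι ℝ) (j : ι) : EuclideanSpace ℝ (Fin p) :=
  WithLp.toLp 2 (A.col j)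

theorem vnorm_eq_norm (v : Fin p → ℝ) : vnorm v = ‖WithLp.toLp 2 v‖ := by
  simp only [vnorm, EuclideanSpace.norm_eq, Real.norm_eq_abs, sq_abs]

theorem columnMap_euclideanCol_apply [Fintype ι] (A : Matrix (Fin p) ι ℝ)
    (v : EuclideanSpace ℝ ι) :
    columnMap (euclideanCol A) v = WithLp.toLp 2 (A *ᵥ v.ofLp) := by
  ext b
  simp [columnMap_apply, euclideanCol, mulVec, dotProduct, mul_comm]

theorem opnorm_eq_norm_columnMap (A : Matrix (Fin p) (Fin n) ℝ) :
    opnorm A = ‖columnMap (euclideanCol A)‖ := by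
  refine congrArg norm (ContinuousLinearMap.ext fun v => ?_)
  exact (columnMap_euclideanCol_apply A v).symm

theorem columnMap_adjoint_euclideanCol [Fintype ι] (A : Matrix (Fin p) ι ℝ)
    (B : Matrix (Fin p) (Fin q) ℝ) (l : Fin q) :
    columnMap (euclideanCol A) (((columnMap (euclideanCol A))†) (euclideanCol B l)) =
      euclideanCol (A * Aᵀ * B) l := by
  have h_adjoint :
      ((columnMap (euclideanCol A))†) (euclideanCol B l) = WithLp.toLp 2 (Aᵀ *ᵥ B.col l) := by
    ext j
    simp [adjoint_columnMap_apply, euclideanCol, PiLp.inner_apply, mulVec, dotProduct, mul_comm]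
  rw [h_adjoint, columnMap_euclideanCol_apply, mulVec_mulVec]
  rfl

theorem orthonormal_euclideanCol {U : Matrix (Fin p) (Fin q) ℝ} (hU : Uᵀ * U = 1) :
    Orthonormal ℝ (euclideanCol U) := by
  rw [orthonormal_iff_ite]
  intro i j
  rw [← one_apply, ← hU]
  simp [euclideanCol, PiLp.inner_apply, mul_apply, mul_comm]

end EuclideanColumns

namespace SVDData

variable {p n : ℕ} {A : Matrix (Fin p) (Fin n) ℝ}

theorem mul_transpose_mul_U (D : SVDData p n A) :
    A * Aᵀ * D.U = D.U * diagonal fun l : Fin p => D.sv l ^ 2 := by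
  set S : Matrix (Fin p) (Fin n) ℝ :=
    Matrix.of fun i j => if (i : ℕ) = (j : ℕ) then D.sv i else 0 with hS
  have h_diag : S * Sᵀ = diagonal fun l : Fin p => D.sv l ^ 2 := by
    ext i l
    simp only [mul_apply, transpose_apply, hS, of_apply, diagonal_apply]
    rcases lt_or_ge (i : ℕ) n with hi | hi
    · rw [Finset.sum_eq_single ⟨i, hi⟩ (fun j _ hj => by simp [Ne.symm (Fin.val_ne_iff.2 hj)])
        (by simp)]
      simp only [if_true, eq_comm (a := (l : ℕ)), Fin.val_inj]
      split_ifs with h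
      · rw [h, sq]
      · rw [mul_zero]
    · rw [D.sv_zero i ((min_le_right p n).trans hi)]
      simp
  have hA : A = D.U * S * D.Vᵀ := D.decomp
  calc A * Aᵀ * D.U = D.U * S * (D.Vᵀ * D.V) * Sᵀ * (D.Uᵀ * D.U) := by
        nth_rw 1 2 [hA]
        simp only [transpose_mul, transpose_transpose, Matrix.mul_assoc]
    _ = D.U * diagonal fun l : Fin p => D.sv l ^ 2 := by
        rw [D.hU, D.hV, Matrix.mul_one, Matrix.mul_one, Matrix.mul_assoc, h_diag]

/-- The left singular vectors and singular values of `D`, as a `LeftSingularSystem` of the operator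
with matrix `A`. -/
def leftSingularSystem (D : SVDData p n A) : LeftSingularSystem (columnMap (euclideanCol A)) p where
  basis := OrthonormalBasis.mk (orthonormal_euclideanCol D.hU)
    ((orthonormal_euclideanCol D.hU).linearIndependent.span_eq_top_of_card_eq_finrank'
      (by simp)).ge
  sv := D.sv
  antitone_sv := fun i j => D.sv_anti i j
  sv_nonneg := D.sv_nonneg
  sv_eq_zero := fun l hl => D.sv_zero l ((min_le_left p n).trans hl)
  apply_adjoint_basis := fun l => by
    rw [OrthonormalBasis.coe_mk, columnMap_adjoint_euclideanCol, D.mul_transpose_mul_U]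
    ext b
    simp [euclideanCol, mul_comm]

theorem leftSingularSystem_proj (D : SVDData p n A) (r : ℕ) (v : Fin p → ℝ) :
    D.leftSingularSystem.proj r (WithLp.toLp 2 v) = WithLp.toLp 2 (projr D.U r *ᵥ v) := by
  rw [LeftSingularSystem.proj_apply]
  ext b
  simp only [leftSingularSystem, OrthonormalBasis.coe_mk, euclideanCol, PiLp.inner_apply, projr,
    mulVec, dotProduct, of_apply, Finset.sum_mul]
  rw [Finset.sum_comm, WithLp.ofLp_sum, Finset.sum_apply]
  refine Finset.sum_congr rfl fun l _ => ?_
  split_ifs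
  · simp [Finset.mul_sum, mul_comm, mul_left_comm]
  · simp

end SVDData

theorem IsKMeans.isKMeansMinimizer {p n k : ℕ} {W : Matrix (Fin p) (Fin p) ℝ}
    {X : Matrix (Fin p) (Fin n) ℝ} {w : Fin n → Fin k} {c : Fin k → Fin p → ℝ}
    (h : IsKMeans W X w c) :
    IsKMeansMinimizer (fun j => WithLp.toLp 2 (W *ᵥ X.col j) : Fin n → EuclideanSpace ℝ (Fin p)) w
      (fun a => WithLp.toLp 2 (c a)) := fun w' c' => by
  simp only [EuclideanSpace.norm_sq_eq, Real.norm_eq_abs, sq_abs]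
  exact h w' fun a => (c' a).ofLp

theorem card_ne_le_of_miscl_eq {n k : ℕ} {w z : Fin (n + 1) → Fin k} {φ : Equiv.Perm (Fin k)}
    (h : miscl w z = (#{i | w i ≠ φ (z i)} : ℝ) / (n + 1)) (σ : Equiv.Perm (Fin k)) :
    #{i | w i ≠ φ (z i)} ≤ #{i | w i ≠ σ (z i)} := by
  rw [miscl, Nat.cast_add_one, div_left_inj' n.cast_add_one_ne_zero] at h
  have h_le := ciInf_le (f := fun σ : Equiv.Perm (Fin k) => (#{i | w i ≠ σ (z i)} : ℝ))
    (Set.finite_range _).bddBelow σ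
  exact_mod_cast h.symm.trans_le h_le

theorem delta_nonneg {p k : ℕ} (θ : Fin k → Fin p → ℝ) : 0 ≤ Delta θ :=
  Real.iInf_nonneg fun _ => Real.sqrt_nonneg _

theorem delta_le_norm_sub {p k : ℕ} (θ : Fin k → Fin p → ℝ) {a b : Fin k} (hab : a ≠ b) :
    Delta θ ≤ ‖WithLp.toLp 2 (θ a) - WithLp.toLp 2 (θ b)‖ := by
  rw [← WithLp.toLp_sub, ← vnorm_eq_norm]
  exact ciInf_le (f := fun q : {q : Fin k × Fin k // q.1 ≠ q.2} =>
    vnorm fun i => θ q.1.1 i - θ q.1.2 i) (Set.finite_range _).bddBelow ⟨(a, b), hab⟩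

/-- The size of the smallest cluster, `β n / k` in terms of `betaMin`. -/
def minClusterSize {n k : ℕ} (z : Fin n → Fin k) : ℝ := ⨅ a : Fin k, (#{i | z i = a} : ℝ)

section MinClusterSize

variable {n k : ℕ} (z : Fin (n + 1) → Fin k)

theorem minClusterSize_le (a : Fin k) : minClusterSize z ≤ #{i | z i = a} :=
  ciInf_le (f := fun a : Fin k => (#{i | z i = a} : ℝ)) (Set.finite_range _).bddBelow a

theorem betaMin_mul : betaMin (n + 1) k z * (n + 1) = k * minClusterSize z := by
  rw [betaMin, Nat.cast_add_one, mul_right_comm, div_mul_cancel₀ _ n.cast_add_one_ne_zero]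
  rfl

theorem mul_sq_le_minClusterSize {C : ℝ} (h : C ≤ betaMin (n + 1) k z * (n + 1) / k ^ 3) :
    C * k ^ 2 ≤ minClusterSize z := by
  have hk : (0 : ℝ) < k := Nat.cast_pos.2 (Fin.pos (z 0))
  rw [betaMin_mul, le_div_iff₀ (by positivity)] at h
  refine le_of_mul_le_mul_left ?_ hk
  linarith

theorem signalToNoise_mul_le {Δ e : ℝ} (hΔ : 0 ≤ Δ) (he : 0 < e) :
    Δ / ((√(betaMin (n + 1) k z))⁻¹ * k ^ 2 * (√(n + 1 : ℝ))⁻¹ * e) * (k * e) ≤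
      Δ * √(minClusterSize z) := by
  have hk : (1 : ℝ) ≤ k := mod_cast Fin.pos (z 0)
  have h_sqrt : √(betaMin (n + 1) k z) * √(n + 1 : ℝ) = √k * √(minClusterSize z) := by
    rw [← Real.sqrt_mul' _ (by positivity), betaMin_mul, Real.sqrt_mul (by positivity)]
  have h_sqrt_le : √(k : ℝ) ≤ k := Real.sqrt_le_iff.2 ⟨by positivity, le_self_pow₀ hk two_ne_zero⟩
  calc Δ / ((√(betaMin (n + 1) k z))⁻¹ * k ^ 2 * (√(n + 1 : ℝ))⁻¹ * e) * (k * e)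
      = Δ * (√(betaMin (n + 1) k z) * √(n + 1 : ℝ)) / k := by
        field_simp
    _ = Δ * √(minClusterSize z) * (√k / k) := by
        rw [h_sqrt]
        ring
    _ ≤ Δ * √(minClusterSize z) :=
        mul_le_of_le_one_right (by positivity) (div_le_one_of_le₀ h_sqrt_le (by positivity))

end MinClusterSize

theorem lintegral_card_le_sum_measure {Ω ι : Type*} [MeasurableSpace Ω] [Fintype ι] (μ : Measure Ω)
    {q : Ω → ι → Prop} [∀ ω, DecidablePred (q ω)] {S : ι → Set Ω} (h : ∀ ω i, q ω i → ω ∈ S i) :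
    ∫⁻ ω, (#{i | q ω i} : ℝ≥0∞) ∂μ ≤ ∑ i, μ (S i) := by
  have h_meas (i : ι) : MeasurableSet (toMeasurable μ (S i)) := measurableSet_toMeasurable _ _
  calc ∫⁻ ω, (#{i | q ω i} : ℝ≥0∞) ∂μ
      ≤ ∫⁻ ω, ∑ i, (toMeasurable μ (S i)).indicator 1 ω ∂μ := by
        refine lintegral_mono fun ω => ?_
        rw [Finset.card_filter, Nat.cast_sum]
        refine Finset.sum_le_sum fun i _ => ?_
        split_ifs with hi
        · simp [Set.indicator_of_mem (subset_toMeasurable μ _ (h ω i hi))]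
        · simp
    _ = ∑ i, μ (S i) := by
        rw [lintegral_finsetSum _ fun i _ => measurable_one.indicator (h_meas i)]
        simp only [lintegral_indicator_one (h_meas _), measure_toMeasurable]

theorem IsKMeans.le_two_mul_vnorm_leaveOneOut_noise {p n k : ℕ} {z w : Fin (n + 1) → Fin k}
    {θ c : Fin k → Fin p → ℝ} {X P : Matrix (Fin p) (Fin (n + 1)) ℝ} {D : SVDData p (n + 1) X}
    {φ : Equiv.Perm (Fin k)} {T ρ ψ : ℝ} (h : IsKMeans (projr D.U (adaptiveRank D.sv k T)) X w c)
    (hP : ∀ a j, P a j = θ (z j) a) (h_size : 5 * (k : ℝ) ^ 2 ≤ minClusterSize z)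
    (hφ : ∀ σ : Equiv.Perm (Fin k), #{i | w i ≠ φ (z i)} ≤ #{i | w i ≠ σ (z i)})
    (h_pos : 0 < opnorm (X - P)) (hT : T = ρ * opnorm (X - P)) (hρ : 16 ≤ ρ) (hψ : 3 * ρ ≤ ψ)
    (hΔ : ψ * (k * opnorm (X - P)) ≤ Delta θ * √(minClusterSize z)) {i : Fin (n + 1)}
    (D' : SVDData p n (X.submatrix id i.succAbove)) (hi : w i ≠ φ (z i)) :
    (1 - 3 * (ρ * ψ⁻¹ + ρ⁻¹)) * Delta θ ≤
      2 * vnorm (projr D'.U (adaptiveRank D.sv k T) *ᵥ fun a => (X - P) a i) := by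
  set θ' : Fin k → EuclideanSpace ℝ (Fin p) := fun a => WithLp.toLp 2 (θ a)
  have h_noise : euclideanCol X - θ' ∘ z = euclideanCol (X - P) := by
    ext j b
    simp [θ', euclideanCol, hP]
  have h_noise_col : euclideanCol X i - θ' (z i) = WithLp.toLp 2 fun a => (X - P) a i :=
    congrFun h_noise i
  have h_kmeans : IsKMeansMinimizer (fun j => D.leftSingularSystem.proj
      (adaptiveRank D.leftSingularSystem.sv (Fintype.card (Fin k)) T) (euclideanCol X j)) w
      fun a => WithLp.toLp 2 (c a) := by
    simp only [euclideanCol, D.leftSingularSystem_proj, Fintype.card_fin]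
    exact h.isKMeansMinimizer
  rw [opnorm_eq_norm_columnMap, ← h_noise] at h_pos hT hΔ
  have h_main := h_kmeans.le_two_mul_norm_leaveOneOut_proj_noise hφ
    (by rwa [Fintype.card_fin]) (minClusterSize_le z) h_pos hT hρ hψ
    (fun _ _ => delta_le_norm_sub θ) (by rwa [Fintype.card_fin]) D'.leftSingularSystem hi
  rw [h_noise_col, Fintype.card_fin] at h_main
  rw [vnorm_eq_norm, ← D'.leftSingularSystem_proj]
  exact h_main

theorem adaptive_entrywise_decomposition_general {Ω : Type*} [MeasurableSpace Ω] (μ : Measure Ω)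
    {p n k : ℕ} {z : Fin (n + 1) → Fin k} {θ : Fin k → Fin p → ℝ}
    {Pm : Matrix (Fin p) (Fin (n + 1)) ℝ} (hPm : ∀ a j, Pm a j = θ (z j) a)
    (h_size : 5 ≤ betaMin (n + 1) k z * ((n : ℝ) + 1) / (k : ℝ) ^ 3) {T : ℝ}
    {X : Ω → Matrix (Fin p) (Fin (n + 1)) ℝ} (DX : ∀ ω, SVDData p (n + 1) (X ω))
    (DXi : ∀ ω (i : Fin (n + 1)), SVDData p n ((X ω).submatrix id i.succAbove)) {rh : Ω → ℕ}
    (hrh : ∀ ω, rh ω = adaptiveRank (DX ω).sv k T) {zh : Ω → Fin (n + 1) → Fin k}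
    {c : Ω → Fin k → Fin p → ℝ}
    (h_kmeans : ∀ ω, IsKMeans (projr (DX ω).U (rh ω)) (X ω) (zh ω) (c ω))
    {φ : Ω → Equiv.Perm (Fin k)}
    (hφ : ∀ ω, miscl (zh ω) z = (#{i | zh ω i ≠ φ ω (z i)} : ℝ) / ((n : ℝ) + 1))
    {ψ0 ρT : Ω → ℝ}
    (hψ0 : ∀ ω, ψ0 ω = Delta θ / ((√(betaMin (n + 1) k z))⁻¹ * (k : ℝ) ^ 2 *
      (√((n : ℝ) + 1))⁻¹ * opnorm (X ω - Pm)))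
    (hρT : ∀ ω, ρT ω = T / opnorm (X ω - Pm)) (hρ : ∀ ω, 16 ≤ ρT ω)
    (hψ : ∀ ω, 3 * ρT ω ≤ ψ0 ω) :
    (∀ ω i, zh ω i ≠ φ ω (z i) →
      (1 - 3 * (ρT ω * (ψ0 ω)⁻¹ + (ρT ω)⁻¹)) * Delta θ ≤
        2 * vnorm (projr (DXi ω i).U (rh ω) *ᵥ fun a => (X ω - Pm) a i)) ∧
    ∫⁻ ω, ENNReal.ofReal (miscl (zh ω) z) ∂μ ≤
      ((n : ℝ≥0∞) + 1)⁻¹ * ∑ i : Fin (n + 1),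
        μ {ω | (1 - 3 * (ρT ω * (ψ0 ω)⁻¹ + (ρT ω)⁻¹)) * Delta θ ≤
          2 * vnorm (projr (DXi ω i).U (rh ω) *ᵥ fun a => (X ω - Pm) a i)} := by
  obtain rfl : rh = fun ω => adaptiveRank (DX ω).sv k T := funext hrh
  have h_min := mul_sq_le_minClusterSize z h_size
  have h_pos (ω : Ω) : 0 < opnorm (X ω - Pm) := (norm_nonneg _).lt_of_ne' fun h => by
    have h_div : T / opnorm (X ω - Pm) = 0 := by rw [opnorm, h, div_zero]
    linarith [hρ ω, hρT ω]
  have h_pointwise (ω : Ω) (i : Fin (n + 1)) (hi : zh ω i ≠ φ ω (z i)) :=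
    (h_kmeans ω).le_two_mul_vnorm_leaveOneOut_noise hPm h_min (card_ne_le_of_miscl_eq (hφ ω))
      (h_pos ω) ((div_eq_iff (h_pos ω).ne').1 (hρT ω).symm) (hρ ω) (hψ ω)
      (hψ0 ω ▸ signalToNoise_mul_le z (delta_nonneg θ) (h_pos ω)) (DXi ω i) hi
  refine ⟨h_pointwise, ?_⟩
  have h_miscl (ω : Ω) : ENNReal.ofReal (miscl (zh ω) z) =
      ((n : ℝ≥0∞) + 1)⁻¹ * (#{i | zh ω i ≠ φ ω (z i)} : ℝ≥0∞) := by
    rw [hφ, ← Nat.cast_add_one, ENNReal.ofReal_div_of_pos (by positivity), ENNReal.ofReal_natCast,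
      ENNReal.ofReal_natCast, ENNReal.div_eq_inv_mul, Nat.cast_add_one]
  simp only [h_miscl]
  rw [lintegral_const_mul' _ _ (by simp)]
  gcongr
  exact lintegral_card_le_sum_measure μ h_pointwise

/-- **Lemma 3 (entrywise decomposition for adaptive spectral clustering).**
`r̂ := max{a ∈ [k] : λ̂_a − λ̂_{a+1} ≥ T}`.  There are universal constants `C, C' > 0`
such that if `βn/k⁴ ≥ 400`, `256 < ρ̃ := T/‖E‖ < ψ̃₀/64` and `ψ̃₀ > C` (for every
realization), where `ψ̃₀ := Δ/(β^{-1/2}k²n^{-1/2}‖E‖)`, then for every `ω` and `i`,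
`𝟙{z̃_i ≠ φ(z*_i)} ≤ 𝟙{(1 − C'(ρ̃ψ̃₀⁻¹ + ρ̃⁻¹))Δ ≤ 2‖Û_{−i,1:r̂}Û_{−i,1:r̂}ᵀ ε_i‖}`;
consequently `E ℓ(z̃,z*) ≤ n⁻¹ Σ_i E 𝟙{(1 − C'(ρ̃ψ̃₀⁻¹ + ρ̃⁻¹))Δ ≤ 2‖Û_{−i,1:r̂}Û_{−i,1:r̂}ᵀ ε_i‖}`. -/
theorem adaptive_entrywise_decomposition :
    ∃ C C' : ℝ, 0 < C ∧ 0 < C' ∧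
      ∀ (Ω : Type) (mΩ : MeasurableSpace Ω) (μ : Measure Ω), IsProbabilityMeasure μ →
      ∀ (p n k : ℕ) (z : Fin (n + 1) → Fin k) (θ : Fin k → Fin p → ℝ)
        (Pm : Matrix (Fin p) (Fin (n + 1)) ℝ), (∀ a j, Pm a j = θ (z j) a) →
      400 ≤ betaMin (n + 1) k z * ((n : ℝ) + 1) / (k : ℝ) ^ 4 →
      ∀ (T : ℝ) (X : Ω → Matrix (Fin p) (Fin (n + 1)) ℝ)
        (DX : ∀ ω, SVDData p (n + 1) (X ω))
        (DXi : ∀ ω (i : Fin (n + 1)), SVDData p n ((X ω).submatrix id i.succAbove))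
        (rh : Ω → ℕ),
        (∀ ω, rh ω =
          (((Finset.Icc 1 k).filter fun a => T ≤ (DX ω).sv (a - 1) - (DX ω).sv a).sup id)) →
      ∀ (zh : Ω → Fin (n + 1) → Fin k) (c : Ω → Fin k → Fin p → ℝ),
        (∀ ω, IsKMeans (projr (DX ω).U (rh ω)) (X ω) (zh ω) (c ω)) →
      ∀ φ : Ω → Equiv.Perm (Fin k),
        (∀ ω, miscl (zh ω) z =
          ((Finset.univ.filter fun i => zh ω i ≠ (φ ω) (z i)).card : ℝ) / ((n : ℝ) + 1)) →
      ∀ ψ0 ρT : Ω → ℝ,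
        (∀ ω, ψ0 ω = Delta θ / ((Real.sqrt (betaMin (n + 1) k z))⁻¹ * (k : ℝ) ^ 2 *
            (Real.sqrt ((n : ℝ) + 1))⁻¹ * opnorm (X ω - Pm))) →
        (∀ ω, ρT ω = T / opnorm (X ω - Pm)) →
        (∀ ω, 256 < ρT ω) → (∀ ω, ρT ω < ψ0 ω / 64) → (∀ ω, C < ψ0 ω) →
        (∀ ω i, zh ω i ≠ (φ ω) (z i) →
          (1 - C' * (ρT ω * (ψ0 ω)⁻¹ + (ρT ω)⁻¹)) * Delta θ ≤
            2 * vnorm ((projr (DXi ω i).U (rh ω)).mulVec fun a => (X ω - Pm) a i)) ∧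
        ∫⁻ ω, ENNReal.ofReal (miscl (zh ω) z) ∂μ ≤
          ((n : ℝ≥0∞) + 1)⁻¹ * ∑ i : Fin (n + 1),
            μ {ω | (1 - C' * (ρT ω * (ψ0 ω)⁻¹ + (ρT ω)⁻¹)) * Delta θ ≤
              2 * vnorm ((projr (DXi ω i).U (rh ω)).mulVec fun a => (X ω - Pm) a i)} := by
  refine ⟨1, 3, one_pos, three_pos, ?_⟩
  intro Ω _ μ _ p n k z θ Pm hPm h_size T X DX DXi rh hrh zh c h_kmeans φ hφ ψ0 ρT hψ0 hρT hρ hψ _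
  have h_k : (1 : ℝ) ≤ k := Nat.one_le_cast.2 (Fin.pos (z 0))
  have h_size' : 5 ≤ betaMin (n + 1) k z * ((n : ℝ) + 1) / (k : ℝ) ^ 3 := by
    rw [le_div_iff₀ (by positivity)] at h_size ⊢
    linarith [pow_le_pow_right₀ h_k (show 3 ≤ 4 by norm_num), pow_pos (one_pos.trans_le h_k) 4]
  exact adaptive_entrywise_decomposition_general μ hPm h_size' DX DXi hrh h_kmeans hφ hψ0 hρT
    (fun ω => by linarith [hρ ω]) (fun ω => by linarith [hρ ω, hψ ω])
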